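/- arXiv:1512.05028 — 8 statements merged into one kernel-verified Lean document; each statement's English description precedes it below -/
import Mathlib

section
/- Let U be a finite set and let H be a finite nonempty family of functions from U to Fin m (m ≥ 1) such that for every pair of distinct elements x, y ∈ U, the number of functions h ∈ H with h(x) = h(y) is at most |H| / m. Then for every subset S ⊆ U with |S| · (|S| − 1) < 2m, there exists a function h ∈ H that is injective on S. In particular, taking m = n² and |S| = n, a 2-universal family into a range of size n² always contains a function that is perfect (injective) on any given n-element set. -/
/-!
The proof is a first-moment argument by double counting the triples `(h, x, y)` with `h ∈ H`,
`x ≠ y` in `S` and `h x = h y`. If no `h ∈ H` were injective on `S`, each `h` would contribute at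
least two ordered pairs, `(x, y)` and `(y, x)`, giving at least `2|H|` triples. Universality bounds
the number of triples by `|S|(|S| - 1) · |H| / m`, which is less than `2|H|`.
-/

/-- A 2-universal family of hash functions from a finite set `U` into `Fin m`
contains a function that is injective on any set `S` with `|S|·(|S|-1) < 2m`. -/
theorem stmt_0 {U : Type*} [Fintype U] [DecidableEq U] {m : ℕ} (hm : 1 ≤ m)
    (H : Finset (U → Fin m)) (hH : H.Nonempty)
    (huniv : ∀ x y : U, x ≠ y →
      (H.filter (fun h => h x = h y)).card * m ≤ H.card) :
    ∀ S : Finset U, S.card * (S.card - 1) < 2 * m →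
      ∃ h ∈ H, Set.InjOn h (S : Set U) := by
  intro S hS
  by_contra! hcon
  have hlow : ∀ h ∈ H, 2 ≤ (S.offDiag.filter (fun p => h p.1 = h p.2)).card := by
    intro h hh
    have hni := hcon h hh
    simp only [Set.InjOn, not_forall] at hni
    obtain ⟨x, hx, y, hy, hxy, hne⟩ := hni
    rw [Finset.mem_coe] at hx hy
    have hsub : ({(x, y), (y, x)} : Finset (U × U)) ⊆
        S.offDiag.filter (fun p => h p.1 = h p.2) := by
      intro p hp
      simp only [Finset.mem_insert, Finset.mem_singleton] at hp
      rcases hp with rfl | rfl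
      · simp [hx, hy, hxy, hne]
      · simp [hx, hy, hxy, Ne.symm hne]
    have hpair : ((x, y) : U × U) ≠ (y, x) := fun e => hne (congrArg Prod.fst e)
    calc 2 = ({(x, y), (y, x)} : Finset (U × U)).card := (Finset.card_pair hpair).symm
      _ ≤ _ := Finset.card_le_card hsub
  have hswap : ∑ h ∈ H, (S.offDiag.filter (fun p => h p.1 = h p.2)).card
      = ∑ p ∈ S.offDiag, (H.filter (fun h => h p.1 = h p.2)).card :=
    Finset.sum_card_bipartiteAbove_eq_sum_card_bipartiteBelow
      (fun (h : U → Fin m) (p : U × U) => h p.1 = h p.2)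
  have h1 : H.card * 2 ≤ ∑ h ∈ H, (S.offDiag.filter (fun p => h p.1 = h p.2)).card := by
    simpa using Finset.card_nsmul_le_sum H _ 2 hlow
  have h2 : (∑ p ∈ S.offDiag, (H.filter (fun h => h p.1 = h p.2)).card) * m
      ≤ S.offDiag.card * H.card := by
    rw [Finset.sum_mul]
    simpa using Finset.sum_le_card_nsmul S.offDiag _ H.card
      (fun p hp => huniv p.1 p.2 (Finset.mem_offDiag.1 hp).2.2)
  have h3 : S.offDiag.card = S.card * (S.card - 1) := by
    rw [Finset.offDiag_card, Nat.mul_sub_one]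
  rw [hswap] at h1
  rw [h3] at h2
  have h4 := Nat.mul_le_mul_right m h1
  have h5 := Nat.mul_lt_mul_of_pos_right hS hH.card_pos
  linarith
end

section
/- There exists a universal constant α > 0 with the following property. For every integer n ≥ 1, every prime P with n² < P, and every subset S of ZMod P with |S| = n, there exist elements a, b, c ∈ ZMod P such that, writing f(x) = a·x² + b·x + c (arithmetic in ZMod P) and letting v(x) denote the natural-number representative of f(x) in [0, P): (1) for all distinct x, y ∈ S, v(x) mod n² ≠ v(y) mod n²; and (2) ∑_{i=0}^{n−1} |S_i|³ ≤ α·n, where S_i = {x ∈ S : v(x) mod n = i}. -/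
/-!
The proof is the first-moment method over a uniformly random `(a, b, c) ∈ (ZMod P)³`.

For `x ≠ y` the pair `(f x, f y)` is uniform on `(ZMod P)²`, and for distinct `x, y, z` the triple
`(f x, f y, f z)` is uniform on `(ZMod P)³`.  When `m ≤ P`, each residue class modulo `m` contains
`⌊P / m⌋` or `⌊P / m⌋ + 1` of the numbers `0, …, P - 1`.  Hence two uniform values agree modulo `m`
with probability at most `9 / (8 m)` (`eight_mul_sum_sq_le`), and three with probability at most
`4 / m²` (`sq_mul_sum_cube_le`).

* With `m = n²`, the expected number of ordered colliding pairs is at most `9 / 8`.  Collisions come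
  in symmetric pairs, so some collision occurs with probability at most `9 / 16`.  The crude
  collision bound `2 / m` would not leave a constant amount of room here.
* With `m = n`, the sum of cubed bucket sizes counts the triples of `S³` lying in a single bucket.
  Splitting by the coincidences among the three points bounds its expectation by `11 n`, so it
  exceeds `32 n` with probability at most `11 / 32`.

Since `9 / 16 + 11 / 32 < 1`, some choice of coefficients avoids both bad events.
-/

open Finset

namespace QuadHash

/-- The quadratic with coefficient triple `g = (a, b, c)`, evaluated at `x`. -/
def quad {P : ℕ} (g : ZMod P × ZMod P × ZMod P) (x : ZMod P) : ZMod P :=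
  g.1 * x ^ 2 + g.2.1 * x + g.2.2

section Fibers

variable {α : Type*} (S : Finset α) (k : α → ℕ) (m : ℕ)

lemma card_pairs_eq (hk : ∀ x ∈ S, k x < m) :
    ((S ×ˢ S).filter (fun p => k p.1 = k p.2)).card =
      ∑ i ∈ range m, (S.filter (fun x => k x = i)).card ^ 2 := by
  rw [card_eq_sum_card_fiberwise (f := fun p => k p.1) (t := range m)]
  · refine sum_congr rfl fun i _ => ?_
    rw [sq, ← card_product]
    congr 1
    ext ⟨x, y⟩
    simp only [mem_filter, mem_product]
    grind
  · intro p hp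
    simp only [coe_filter, mem_product, Set.mem_ofPred_eq] at hp
    simpa using hk _ hp.1.1

lemma card_triples_eq (hk : ∀ x ∈ S, k x < m) :
    ((S ×ˢ S ×ˢ S).filter (fun p => k p.1 = k p.2.1 ∧ k p.2.1 = k p.2.2)).card =
      ∑ i ∈ range m, (S.filter (fun x => k x = i)).card ^ 3 := by
  rw [card_eq_sum_card_fiberwise (f := fun p => k p.1) (t := range m)]
  · refine sum_congr rfl fun i _ => ?_
    rw [pow_succ', sq, ← card_product, ← card_product]
    congr 1
    ext ⟨x, y, z⟩
    simp only [mem_filter, mem_product]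
    grind
  · intro p hp
    simp only [coe_filter, mem_product, Set.mem_ofPred_eq] at hp
    simpa using hk _ hp.1.1

end Fibers

section Residues

variable {P : ℕ} [Fact P.Prime] {m : ℕ}

/-- Each residue class modulo `m` contains `⌊P / m⌋` or `⌊P / m⌋ + 1` of the representatives
`0, …, P - 1`. -/
lemma card_residue (hm : 1 ≤ m) {r : ℕ} (hr : r < m) :
    P / m ≤ (univ.filter (fun u : ZMod P => u.val % m = r)).card ∧
      (univ.filter (fun u : ZMod P => u.val % m = r)).card ≤ P / m + 1 := by
  have h : (univ.filter (fun u : ZMod P => u.val % m = r)).card =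
      Nat.count (fun v => v ≡ r [MOD m]) P := by
    rw [Nat.count_eq_card_filter_range]
    refine card_bij (fun u _ => u.val) ?_ ?_ ?_
    · intro u hu
      simp only [mem_filter, mem_univ, true_and] at hu
      simp [ZMod.val_lt, Nat.ModEq, hu, Nat.mod_eq_of_lt hr]
    · intro u _ v _ huv
      exact ZMod.val_injective P huv
    · intro v hv
      simp only [mem_filter, mem_range, Nat.ModEq, Nat.mod_eq_of_lt hr] at hv
      refine ⟨(v : ZMod P), ?_, ZMod.val_cast_of_lt hv.1⟩
      simp [ZMod.val_cast_of_lt hv.1, hv.2]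
  rw [h, Nat.count_modEq_card _ (by omega)]
  split_ifs <;> omega

lemma sum_card_residue (hm : 1 ≤ m) :
    ∑ r ∈ range m, (univ.filter (fun u : ZMod P => u.val % m = r)).card = P := by
  rw [← card_eq_sum_card_fiberwise]
  · simp [ZMod.card]
  · intro u _
    simpa using Nat.mod_lt _ (by omega)

/-- Two independent uniform residues agree modulo `m` with probability at most `9 / (8 m)`. -/
lemma eight_mul_sum_sq_le (hm : 1 ≤ m) (hP : m ≤ P) :
    8 * m * ∑ r ∈ range m, (univ.filter (fun u : ZMod P => u.val % m = r)).card ^ 2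
      ≤ 9 * P ^ 2 := by
  set N : ℕ → ℕ := fun r => (univ.filter (fun u : ZMod P => u.val % m = r)).card with hN
  have hq : 1 ≤ P / m := (Nat.one_le_div_iff (by omega)).2 hP
  generalize hqd : P / m = q at hq
  -- `(N r - q) (N r - q - 1) ≤ 0` linearizes each square.
  have h1 : ∀ r ∈ range m, (N r : ℤ) ^ 2 ≤ (2 * q + 1) * N r - q * (q + 1) := by
    intro r hr
    have := card_residue (P := P) hm (mem_range.1 hr)
    rw [hqd] at this
    have ha : (q : ℤ) ≤ N r := by exact_mod_cast this.1
    have hb : (N r : ℤ) ≤ q + 1 := by exact_mod_cast this.2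
    nlinarith
  have h2 := sum_le_sum h1
  rw [sum_sub_distrib, ← mul_sum, ← Nat.cast_sum (range m) N, sum_card_residue hm] at h2
  simp only [sum_const, card_range, nsmul_eq_mul] at h2
  change 8 * m * ∑ r ∈ range m, N r ^ 2 ≤ _
  zify
  have h3 : (8 * m : ℤ) * ∑ r ∈ range m, (N r : ℤ) ^ 2
      ≤ 8 * m * ((2 * q + 1) * P - m * (q * (q + 1))) := by gcongr
  refine h3.trans ?_
  -- Completing the square in `P` leaves `8 m² (q² + q - 2) / 9 ≥ 0`, as `q ≥ 1`.
  have hq' : (0 : ℤ) ≤ (q - 1) * (q + 2) := by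
    have : (1 : ℤ) ≤ q := by exact_mod_cast hq
    nlinarith
  nlinarith [sq_nonneg (9 * (P : ℤ) - 4 * m * (2 * q + 1)), mul_nonneg (sq_nonneg (m : ℤ)) hq']

/-- Three independent uniform residues agree modulo `m` with probability at most `4 / m²`. -/
lemma sq_mul_sum_cube_le (hm : 1 ≤ m) (hP : m ≤ P) :
    m ^ 2 * ∑ r ∈ range m, (univ.filter (fun u : ZMod P => u.val % m = r)).card ^ 3
      ≤ 4 * P ^ 3 := by
  calc _ = ∑ r ∈ range m, (m * (univ.filter (fun u : ZMod P => u.val % m = r)).card) ^ 2 *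
          (univ.filter (fun u : ZMod P => u.val % m = r)).card := by
        rw [mul_sum]; exact sum_congr rfl fun r _ => by ring
    _ ≤ ∑ r ∈ range m, (2 * P) ^ 2 * (univ.filter (fun u : ZMod P => u.val % m = r)).card := by
        refine sum_le_sum fun r hr => ?_
        refine Nat.mul_le_mul_right _ (Nat.pow_le_pow_left ?_ 2)
        have h1 := (card_residue (P := P) hm (mem_range.1 hr)).2
        have h2 := Nat.mul_le_mul_left m h1
        have h3 := Nat.mul_div_le P m
        rw [mul_add] at h2
        omega
    _ = 4 * P ^ 3 := by
        rw [← mul_sum, sum_card_residue hm]; ring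

end Residues

section Coefficients

variable {P : ℕ} [Fact P.Prime] {m : ℕ}

lemma card_coeff : Fintype.card (ZMod P × ZMod P × ZMod P) = P ^ 3 := by
  simp only [Fintype.card_prod, ZMod.card]; ring

/-- For distinct points `x, y`, the map `(a, b, c) ↦ (a, f x, f y)` is injective, so the number of
colliding coefficient triples is controlled by the number of congruent pairs of residues. -/
lemma card_pair_le (hm : 1 ≤ m) (hP : m ≤ P) {x y : ZMod P} (hxy : x ≠ y) :
    8 * m * (univ.filter (fun g : ZMod P × ZMod P × ZMod P =>
      (quad g x).val % m = (quad g y).val % m)).card ≤ 9 * P ^ 3 := by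
  have h : (univ.filter (fun g : ZMod P × ZMod P × ZMod P =>
      (quad g x).val % m = (quad g y).val % m)).card ≤
      ((univ : Finset (ZMod P)) ×ˢ ((univ ×ˢ univ : Finset (ZMod P × ZMod P)).filter
        (fun p => p.1.val % m = p.2.val % m))).card := by
    refine card_le_card_of_injOn (fun g => (g.1, quad g x, quad g y)) ?_ ?_
    · intro g hg
      simpa using hg
    · rintro ⟨a, b, c⟩ - ⟨a', b', c'⟩ - hg
      simp only [Prod.mk.injEq, quad] at hg
      obtain ⟨rfl, h1, h2⟩ := hg
      have hb : (b - b') * (x - y) = 0 := by linear_combination h1 - h2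
      obtain hb | hb := mul_eq_zero.1 hb
      · obtain rfl := sub_eq_zero.1 hb
        simpa using h1
      · exact absurd (sub_eq_zero.1 hb) hxy
  rw [card_product, card_pairs_eq univ (fun u : ZMod P => u.val % m) m
    (fun _ _ => Nat.mod_lt _ hm), card_univ, ZMod.card] at h
  calc _ ≤ 8 * m * (P * _) := Nat.mul_le_mul_left _ h
    _ = P * (8 * m * _) := by ring
    _ ≤ P * (9 * P ^ 2) := Nat.mul_le_mul_left _ (eight_mul_sum_sq_le hm hP)
    _ = 9 * P ^ 3 := by ring

/-- A quadratic is determined by its values at three distinct points, so the number of coefficient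
triples putting them in one class is controlled by the number of congruent triples of residues. -/
lemma card_triple_le (hm : 1 ≤ m) (hP : m ≤ P) {x y z : ZMod P} (hxy : x ≠ y) (hyz : y ≠ z)
    (hxz : x ≠ z) :
    m ^ 2 * (univ.filter (fun g : ZMod P × ZMod P × ZMod P =>
      (quad g x).val % m = (quad g y).val % m ∧ (quad g y).val % m = (quad g z).val % m)).card
      ≤ 4 * P ^ 3 := by
  have h : (univ.filter (fun g : ZMod P × ZMod P × ZMod P =>
      (quad g x).val % m = (quad g y).val % m ∧ (quad g y).val % m = (quad g z).val % m)).card ≤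
      ((univ ×ˢ univ ×ˢ univ : Finset (ZMod P × ZMod P × ZMod P)).filter
        (fun p => p.1.val % m = p.2.1.val % m ∧ p.2.1.val % m = p.2.2.val % m)).card := by
    refine card_le_card_of_injOn (fun g => (quad g x, quad g y, quad g z)) ?_ ?_
    · intro g hg
      simpa using hg
    · rintro ⟨a, b, c⟩ - ⟨a', b', c'⟩ - hg
      simp only [Prod.mk.injEq, quad] at hg
      obtain ⟨h1, h2, h3⟩ := hg
      have ha : (a - a') * ((x - y) * ((y - z) * (x - z))) = 0 := by
        linear_combination (y - z) * h1 - (x - z) * h2 + (x - y) * h3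
      have ha' : a - a' = 0 := (mul_eq_zero.1 ha).resolve_right
        (mul_ne_zero (sub_ne_zero.2 hxy) (mul_ne_zero (sub_ne_zero.2 hyz) (sub_ne_zero.2 hxz)))
      obtain rfl := sub_eq_zero.1 ha'
      have hb : (b - b') * (x - y) = 0 := by linear_combination h1 - h2
      obtain hb | hb := mul_eq_zero.1 hb
      · obtain rfl := sub_eq_zero.1 hb
        simpa using h1
      · exact absurd (sub_eq_zero.1 hb) hxy
  rw [card_triples_eq univ (fun u : ZMod P => u.val % m) m (fun _ _ => Nat.mod_lt _ hm)] at h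
  exact (Nat.mul_le_mul_left _ h).trans (sq_mul_sum_cube_le hm hP)

/-- The bound on the number of coefficient triples placing `x, y, z` in one class, uniform over all
coincidence patterns among the three points. -/
lemma card_triple_le' (hm : 1 ≤ m) (hP : m ≤ P) (x y z : ZMod P) :
    m ^ 2 * (univ.filter (fun g : ZMod P × ZMod P × ZMod P =>
      (quad g x).val % m = (quad g y).val % m ∧ (quad g y).val % m = (quad g z).val % m)).card
      ≤ P ^ 3 * (4 + 2 * m * ((if x = y then 1 else 0) + (if y = z then 1 else 0) +
        (if x = z then 1 else 0)) + m ^ 2 * (if x = y then (if y = z then 1 else 0) else 0)) := by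
  set C := univ.filter (fun g : ZMod P × ZMod P × ZMod P =>
      (quad g x).val % m = (quad g y).val % m ∧ (quad g y).val % m = (quad g z).val % m) with hC
  have two : ∀ u v : ZMod P, u ≠ v →
      (∀ g ∈ C, (quad g u).val % m = (quad g v).val % m) → m ^ 2 * C.card ≤ P ^ 3 * (2 * m) := by
    intro u v huv hsub
    have h1 : C.card ≤ _ := card_le_card
      (fun g hg => mem_filter.2 ⟨mem_univ g, hsub g hg⟩)
    have h2 := card_pair_le hm hP huv
    have h3 := (Nat.mul_le_mul_left (8 * m) h1).trans h2
    nlinarith [Nat.zero_le (m * P ^ 3)]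
  have hmem : ∀ g ∈ C, (quad g x).val % m = (quad g y).val % m ∧
      (quad g y).val % m = (quad g z).val % m := fun g hg => (mem_filter.1 hg).2
  by_cases hxy : x = y
  · by_cases hyz : y = z
    · have h1 : C.card ≤ P ^ 3 := (card_le_univ C).trans card_coeff.le
      calc m ^ 2 * C.card ≤ m ^ 2 * P ^ 3 := Nat.mul_le_mul_left _ h1
        _ = P ^ 3 * (m ^ 2 * 1) := by ring
        _ ≤ _ := by
          rw [if_pos hxy, if_pos hyz, if_pos hxy]
          exact Nat.mul_le_mul_left _ (Nat.le_add_left _ _)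
    · refine (two y z hyz fun g hg => (hmem g hg).2).trans ?_
      gcongr
      rw [if_pos hxy]
      split_ifs <;> nlinarith [Nat.zero_le m, Nat.zero_le (m ^ 2)]
  · by_cases hyz : y = z
    · refine (two x y hxy fun g hg => (hmem g hg).1).trans ?_
      gcongr
      rw [if_pos hyz]
      split_ifs <;> nlinarith [Nat.zero_le m, Nat.zero_le (m ^ 2)]
    · by_cases hxz : x = z
      · refine (two x y hxy fun g hg => (hmem g hg).1).trans ?_
        gcongr
        rw [if_pos hxz]
        split_ifs <;> nlinarith [Nat.zero_le m, Nat.zero_le (m ^ 2)]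
      · have := card_triple_le hm hP hxy hyz hxz
        simp only [hxy, hyz, hxz, if_false]
        rw [← hC] at this
        linarith

/-- The total of the sums of cubed bucket sizes, over all coefficient triples. -/
lemma sum_cubes_le (hm : 1 ≤ m) (hP : m ≤ P) (S : Finset (ZMod P)) (hS : S.card = m) :
    ∑ g : ZMod P × ZMod P × ZMod P, ∑ i ∈ range m,
      (S.filter (fun x => (quad g x).val % m = i)).card ^ 3 ≤ 11 * m * P ^ 3 := by
  have h1 : ∑ g : ZMod P × ZMod P × ZMod P, ∑ i ∈ range m,
      (S.filter (fun x => (quad g x).val % m = i)).card ^ 3 =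
      ∑ x ∈ S, ∑ y ∈ S, ∑ z ∈ S, (univ.filter (fun g : ZMod P × ZMod P × ZMod P =>
      (quad g x).val % m = (quad g y).val % m ∧
        (quad g y).val % m = (quad g z).val % m)).card := by
    have : ∀ g : ZMod P × ZMod P × ZMod P, ∑ i ∈ range m,
      (S.filter (fun x => (quad g x).val % m = i)).card ^ 3 = _ := fun g =>
        (card_triples_eq S (fun x => (quad g x).val % m) m (fun _ _ => Nat.mod_lt _ hm)).symm
    rw [sum_congr rfl fun g _ => this g]
    simp only [card_filter]
    rw [sum_comm]
    simp only [sum_product]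
  have h2 : m ^ 2 * (∑ x ∈ S, ∑ y ∈ S, ∑ z ∈ S,
      (univ.filter (fun g : ZMod P × ZMod P × ZMod P =>
      (quad g x).val % m = (quad g y).val % m ∧
        (quad g y).val % m = (quad g z).val % m)).card) ≤ m ^ 2 * (11 * m * P ^ 3) := by
    simp only [mul_sum]
    refine (sum_le_sum fun x _ => sum_le_sum fun y _ => sum_le_sum fun z _ =>
      card_triple_le' hm hP x y z).trans (le_of_eq ?_)
    have e1 : ∑ x ∈ S, ∑ y ∈ S, (if x = y then 1 else 0) = m := by
      simp [hS]
    have e2 : ∑ x ∈ S, ∑ y ∈ S, (if x = y then (∑ z ∈ S, if y = z then 1 else 0) else 0) = m := by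
      rw [← hS, card_eq_sum_ones]
      refine sum_congr rfl fun x hx => ?_
      simp [hx]
    have e3 : ∀ x y : ZMod P, ∑ z ∈ S, (if x = y then (if y = z then 1 else 0) else 0) =
        if x = y then (∑ z ∈ S, if y = z then 1 else 0) else 0 := by
      intro x y; split_ifs <;> simp
    simp only [← mul_sum, sum_add_distrib, sum_const, e3, e2, e1, hS, smul_eq_mul]
    ring
  rw [h1]
  exact Nat.le_of_mul_le_mul_left h2 (by positivity)

/-- The total number of ordered collisions modulo `m²`, over all coefficient triples. -/
lemma sum_collisions_le (hm : 1 ≤ m) (hP : m ^ 2 ≤ P) (S : Finset (ZMod P)) (hS : S.card = m) :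
    8 * ∑ g : ZMod P × ZMod P × ZMod P,
      (S.offDiag.filter (fun p => (quad g p.1).val % m ^ 2 = (quad g p.2).val % m ^ 2)).card
      ≤ 9 * P ^ 3 := by
  have hm2 : 1 ≤ m ^ 2 := Nat.one_le_pow _ _ hm
  have h1 : ∑ g : ZMod P × ZMod P × ZMod P,
      (S.offDiag.filter (fun p => (quad g p.1).val % m ^ 2 = (quad g p.2).val % m ^ 2)).card =
      ∑ p ∈ S.offDiag, (univ.filter (fun g : ZMod P × ZMod P × ZMod P =>
        (quad g p.1).val % m ^ 2 = (quad g p.2).val % m ^ 2)).card := by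
    simp only [card_filter]
    rw [sum_comm]
  have h2 : ∑ p ∈ S.offDiag, 8 * m ^ 2 * (univ.filter (fun g : ZMod P × ZMod P × ZMod P =>
        (quad g p.1).val % m ^ 2 = (quad g p.2).val % m ^ 2)).card
      ≤ ∑ p ∈ S.offDiag, 9 * P ^ 3 :=
    sum_le_sum fun p hp => card_pair_le hm2 hP (mem_offDiag.1 hp).2.2
  rw [← mul_sum, sum_const, smul_eq_mul, offDiag_card, hS] at h2
  rw [h1]
  refine Nat.le_of_mul_le_mul_left ?_ hm2
  have h3 : (m * m - m) * (9 * P ^ 3) ≤ m ^ 2 * (9 * P ^ 3) := by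
    gcongr
    rw [sq]; exact Nat.sub_le _ _
  linarith

end Coefficients

end QuadHash

open QuadHash in
/-- Lemma 3 of the paper: for a prime `P > n²` and any `S ⊆ ZMod P` of size `n`,
there is a quadratic hash `f(x) = a x² + b x + c` over `ZMod P` that is injective
modulo `n²` on `S` and whose buckets (values modulo `n`) have sum of cubed sizes
at most `α·n` for a universal constant `α`. -/
theorem stmt_1 :
    ∃ α : ℕ, 0 < α ∧
      ∀ (n P : ℕ), 1 ≤ n → P.Prime → n ^ 2 < P →
        ∀ S : Finset (ZMod P), S.card = n →
          ∃ a b c : ZMod P,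
            (∀ x ∈ S, ∀ y ∈ S, x ≠ y →
              (a * x ^ 2 + b * x + c).val % n ^ 2 ≠
                (a * y ^ 2 + b * y + c).val % n ^ 2) ∧
            (∑ i ∈ Finset.range n,
              (S.filter (fun x => (a * x ^ 2 + b * x + c).val % n = i)).card ^ 3)
              ≤ α * n := by
  refine ⟨32, by norm_num, fun n P hn hP hnP S hS => ?_⟩
  have : Fact P.Prime := ⟨hP⟩
  by_contra! hbad
  have hnP' : n ≤ P := (Nat.le_self_pow two_ne_zero n).trans hnP.le
  have hA := sum_collisions_le hn hnP.le S hS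
  have hB := sum_cubes_le hn hnP' S hS
  -- Markov's inequality for both bad events at once: `A / 2 + B / (32 n) ≥ 1` for every `g`.
  have key : ∀ g ∈ (univ : Finset (ZMod P × ZMod P × ZMod P)), 64 * n ≤
      32 * n * (S.offDiag.filter
        (fun p => (quad g p.1).val % n ^ 2 = (quad g p.2).val % n ^ 2)).card +
      2 * ∑ i ∈ range n, (S.filter (fun x => (quad g x).val % n = i)).card ^ 3 := by
    intro g _
    by_cases hinj : ∀ x ∈ S, ∀ y ∈ S, x ≠ y →
        (quad g x).val % n ^ 2 ≠ (quad g y).val % n ^ 2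
    · have h := hbad g.1 g.2.1 g.2.2 hinj
      change 32 * n < ∑ i ∈ range n, (S.filter (fun x => (quad g x).val % n = i)).card ^ 3 at h
      have := Nat.zero_le (32 * n * (S.offDiag.filter
        (fun p => (quad g p.1).val % n ^ 2 = (quad g p.2).val % n ^ 2)).card)
      linarith
    · push Not at hinj
      obtain ⟨x, hx, y, hy, hxy, he⟩ := hinj
      have h2 : 1 < (S.offDiag.filter
          (fun p => (quad g p.1).val % n ^ 2 = (quad g p.2).val % n ^ 2)).card := by
        refine one_lt_card.2 ⟨(x, y), ?_, (y, x), ?_, ?_⟩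
        · simp [hx, hy, hxy, he]
        · simp [hx, hy, hxy.symm, he]
        · simp [hxy]
      have h3 := Nat.mul_le_mul_left (32 * n) h2
      omega
  have hsum := sum_le_sum key
  rw [sum_const, card_univ, card_coeff, smul_eq_mul, sum_add_distrib, ← mul_sum, ← mul_sum] at hsum
  have hpos : 0 < n * P ^ 3 := Nat.mul_pos hn (pow_pos hP.pos 3)
  have hA' := Nat.mul_le_mul_left (4 * n) hA
  nlinarith
end

section
/- Let S be a finite set with |S| = n ≥ 1 and let H be a finite nonempty family of functions from S to Fin n such that: (i) for every pair of distinct x, y ∈ S, |{h ∈ H : h(x) = h(y)}| ≤ |H|/n, and (ii) for every triple of pairwise distinct x, y, z ∈ S, |{h ∈ H : h(x) = h(y) = h(z)}| ≤ |H|/n². Then there exists h ∈ H such that ∑_{i=0}^{n−1} |{x ∈ S : h(x) = i}|³ ≤ 5n. -/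
/-!
For each `h`, the sum of the cubed bucket sizes counts the triples `(x, y, z)` with
`h x = h y = h z` (`sum_bucket_cube`). Summing over `h ∈ H` and exchanging the sums leaves, for each
triple, the number of `h ∈ H` collapsing it. By the collision hypotheses this number, times `n ^ 2`,
is at most `|H| * (1 + n[x = y] + n[y = z] + n[x = z] + n ^ 2 [x = y = z])`; summing over
the `n ^ 3` triples gives `|H| * (n ^ 3 + 3 * n ^ 3 + n ^ 3)`. Thus the average over `H` of the sum
of cubes is at most `5 * n`, and some `h ∈ H` does no worse than the average.
-/

lemma sum_bucket_cube {α β : Type*} [Fintype α] [Fintype β] [DecidableEq β] (h : α → β) :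
    ∑ i : β, (Finset.univ.filter (fun x => h x = i)).card ^ 3
      = ∑ x : α, ∑ y : α, ∑ z : α, if h x = h y ∧ h y = h z then 1 else 0 := by
  have key : ∀ i : β, (Finset.univ.filter (fun x => h x = i)).card ^ 3
      = ∑ x : α, ∑ y : α, ∑ z : α,
        if h x = i then (if h x = h y ∧ h y = h z then 1 else 0) else 0 := by
    intro i
    rw [Finset.card_filter, pow_succ, pow_two, Finset.sum_mul_sum, Finset.sum_mul]
    refine Finset.sum_congr rfl fun x _ => ?_
    rw [Finset.sum_mul]
    refine Finset.sum_congr rfl fun y _ => ?_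
    rw [Finset.mul_sum]
    refine Finset.sum_congr rfl fun z _ => ?_
    grind
  simp_rw [key]
  rw [Finset.sum_comm]
  refine Finset.sum_congr rfl fun x _ => ?_
  rw [Finset.sum_comm]
  refine Finset.sum_congr rfl fun y _ => ?_
  rw [Finset.sum_comm]
  refine Finset.sum_congr rfl fun z _ => ?_
  simp

/-- If a finite nonempty family `H` of functions from an `n`-element set into `Fin n`
has pairwise collision probability at most `1/n` and 3-wise collision probability
at most `1/n²`, then some `h ∈ H` has sum of cubed bucket sizes at most `5n`. -/
theorem stmt_3 {α : Type*} [Fintype α] [DecidableEq α] {n : ℕ} (hn : 1 ≤ n)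
    (hcard : Fintype.card α = n) (H : Finset (α → Fin n)) (hH : H.Nonempty)
    (h2 : ∀ x y : α, x ≠ y →
      (H.filter (fun h => h x = h y)).card * n ≤ H.card)
    (h3 : ∀ x y z : α, x ≠ y → x ≠ z → y ≠ z →
      (H.filter (fun h => h x = h y ∧ h y = h z)).card * n ^ 2 ≤ H.card) :
    ∃ h ∈ H, ∑ i : Fin n, (Finset.univ.filter (fun x => h x = i)).card ^ 3 ≤ 5 * n := by
  apply Finset.exists_le_of_sum_le hH
  simp_rw [sum_bucket_cube]
  have swap : ∑ h ∈ H, ∑ x : α, ∑ y : α, ∑ z : α, (if h x = h y ∧ h y = h z then 1 else 0)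
      = ∑ x : α, ∑ y : α, ∑ z : α, (H.filter (fun h => h x = h y ∧ h y = h z)).card := by
    rw [Finset.sum_comm]
    refine Finset.sum_congr rfl fun x _ => ?_
    rw [Finset.sum_comm]
    refine Finset.sum_congr rfl fun y _ => ?_
    rw [Finset.sum_comm]
    refine Finset.sum_congr rfl fun z _ => ?_
    rw [Finset.card_filter]
  have bound : ∀ x y z : α, (H.filter (fun h => h x = h y ∧ h y = h z)).card * n ^ 2
      ≤ H.card * (1 + (if x = y then n else 0) + (if y = z then n else 0)
        + (if x = z then n else 0) + (if x = y then (if y = z then n ^ 2 else 0) else 0)) := by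
    intro x y z
    -- A single coincidence among `x, y, z` reduces the collision to that of a distinct pair.
    have pair : ∀ u v : α, u ≠ v → (∀ h : α → Fin n, h x = h y ∧ h y = h z → h u = h v) →
        (H.filter (fun h => h x = h y ∧ h y = h z)).card * n ^ 2 ≤ H.card * n := by
      intro u v huv himp
      calc _ ≤ (H.filter (fun h => h u = h v)).card * n ^ 2 :=
            Nat.mul_le_mul_right _
              (Finset.card_le_card (Finset.monotone_filter_right H fun h _ hh => himp h hh))
        _ = (H.filter (fun h => h u = h v)).card * n * n := by ring
        _ ≤ H.card * n := Nat.mul_le_mul_right _ (h2 u v huv)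
    by_cases hxy : x = y
    · by_cases hyz : y = z
      · refine Nat.mul_le_mul (Finset.card_filter_le _ _) ?_
        simp only [hxy, hyz, if_true]
        omega
      · refine (pair y z hyz fun h hh => hh.2).trans (Nat.mul_le_mul_left _ ?_)
        simp only [hxy, if_true]
        omega
    · by_cases hyz : y = z
      · refine (pair x y hxy fun h hh => hh.1).trans (Nat.mul_le_mul_left _ ?_)
        simp only [hyz, if_true]
        omega
      · by_cases hxz : x = z
        · refine (pair x y hxy fun h hh => hh.1).trans (Nat.mul_le_mul_left _ ?_)
          simp only [hxz, if_true]
          omega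
        · refine (h3 x y z hxy hxz hyz).trans (Nat.le_mul_of_pos_right _ ?_)
          omega
  rw [swap, Finset.sum_const, smul_eq_mul]
  refine Nat.le_of_mul_le_mul_right ?_ (pow_pos hn 2)
  simp_rw [Finset.sum_mul]
  calc _ ≤ ∑ x : α, ∑ y : α, ∑ z : α, H.card * (1 + (if x = y then n else 0)
        + (if y = z then n else 0) + (if x = z then n else 0)
        + (if x = y then (if y = z then n ^ 2 else 0) else 0)) :=
        Finset.sum_le_sum fun x _ => Finset.sum_le_sum fun y _ => Finset.sum_le_sum fun z _ =>
          bound x y z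
    _ = H.card * (5 * n) * n ^ 2 := by
        simp_rw [← Finset.mul_sum]
        rw [mul_assoc]
        congr 1
        simp only [Finset.sum_add_distrib, Finset.sum_ite_irrel, Finset.sum_ite_eq,
          Finset.mem_univ, if_true, Finset.sum_const, Finset.card_univ, hcard, smul_eq_mul,
          mul_zero]
        ring
end

section
/- Let r and s be integers with 1 ≤ s ≤ r, and let S be a set of natural numbers contained in [0, 2^r) such that |S|² ≤ 2^s. Then there exist natural numbers a, b ∈ [0, 2^r) such that the function f(x) = ((a·x + b) mod 2^r) div 2^{r−s} is injective on S. -/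
/-!
The offset `b = 0` already works, with `a` odd, by a union bound over the `2 ^ (r - 1)` odd
multipliers `a = 2 * i + 1`.

Fix `x < y` and write `y - x = 2 ^ k * m` with `m` odd. If `x` and `y` collide under `a`, the
residues of `a * x` and `a * y` modulo `2 ^ r` differ by less than `2 ^ (r - s)`. Hence
`a * (y - x)` is congruent to some `2 ^ k * t` with `|t| < Q = 2 ^ (r - s - k)`, that is,
`a * m ≡ t` modulo `N = 2 ^ (r - k)`, where `t` is odd because `a * m` is (`exists_residue`). If
`k ≥ r - s` this is impossible. Otherwise there are `Q` such odd residues `t` modulo `N`, and since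
`a ↦ a * m` permutes the odd residues modulo `2 ^ r`, each of them comes from `2 ^ k` multipliers.
So at most `2 ^ k * Q = 2 ^ (r - s)` odd multipliers are bad for a given pair (`card_bad`).

There are `n (n - 1) / 2` pairs, where `n = |S|`, and
`n (n - 1) / 2 * 2 ^ (r - s) < 2 ^ s / 2 * 2 ^ (r - s) = 2 ^ (r - 1)`, so a good multiplier remains.
-/

/-- If `a * x` and `a * (x + K * m)`, reduced modulo `K * N`, lie in the same block of length `B`,
their difference is a multiple `K * t` of `K`, where `a * m` is congruent to `t` modulo `N`. -/
lemma exists_residue {a x K m N B : ℕ} (hB : 0 < B)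
    (h : a * x % (K * N) / B = a * (x + K * m) % (K * N) / B) :
    ∃ t : ℤ, (N : ℤ) ∣ (a * m : ℤ) - t ∧ (K : ℤ) * |t| < B := by
  have hu := Nat.div_add_mod (a * x) (K * N)
  have hv := Nat.div_add_mod (a * (x + K * m)) (K * N)
  set u := a * x % (K * N)
  set v := a * (x + K * m) % (K * N)
  set p := a * x / (K * N)
  set q := a * (x + K * m) / (K * N)
  have hu' := Nat.div_add_mod u B
  have hv' := Nat.div_add_mod v B
  have hu2 := Nat.mod_lt u hB
  have hv2 := Nat.mod_lt v hB
  rw [h] at hu'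
  zify at hu hv
  have key : (v : ℤ) - u = K * ((a * m : ℤ) - N * (q - p)) := by linear_combination hv - hu
  refine ⟨(a * m : ℤ) - N * (q - p), ⟨q - p, by ring⟩, ?_⟩
  have hK' : (K : ℤ) = |(K : ℤ)| := by simp
  rw [hK', ← abs_mul, ← key, abs_lt]
  generalize B * (v / B) = w at *
  constructor <;> omega

/-- A fixed pair of distinct keys collides under at most `2 ^ (r - s)` of the odd multipliers. -/
lemma card_bad {r s : ℕ} (hs : 1 ≤ s) (hsr : s ≤ r) {x y : ℕ} (hxy : x < y) (hy : y < 2 ^ r) :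
    ((Finset.range (2 ^ (r - 1))).filter fun i =>
      (2 * i + 1) * x % 2 ^ r / 2 ^ (r - s) = (2 * i + 1) * y % 2 ^ r / 2 ^ (r - s)).card
      ≤ 2 ^ (r - s) := by
  obtain ⟨k, m, hm, hd⟩ := Nat.exists_eq_two_pow_mul_odd (n := y - x) (by omega)
  obtain rfl : y = x + 2 ^ k * m := by omega
  have hk : k < r := by
    have : 2 ^ k * 1 ≤ 2 ^ k * m := Nat.mul_le_mul_left _ hm.pos
    exact (Nat.pow_lt_pow_iff_right (by norm_num : 1 < 2)).1 (by omega)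
  have hr : 2 ^ r = 2 ^ k * 2 ^ (r - k) := by rw [← pow_add]; congr 1; omega
  have hN : 2 ^ (r - k) = 2 * 2 ^ (r - k - 1) := by rw [← pow_succ']; congr 1; omega
  have hodd (i : ℕ) : Odd ((2 * i + 1) * m) := (odd_two_mul_add_one i).mul hm
  rcases le_or_gt (r - s) k with hks | hks
  · -- Here `t = 0`, although `a * m` is odd and the modulus even: no multiplier is bad.
    rw [Finset.filter_false_of_mem]
    · simp
    intro i _ h
    rw [hr] at h
    obtain ⟨t, ht, htB⟩ := exists_residue (by positivity) h
    have hle : 2 ^ (r - s) ≤ 2 ^ k := Nat.pow_le_pow_right (by norm_num) hks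
    have ht0 : t = 0 := by
      by_contra h0
      have h1 : 1 ≤ |t| := Int.one_le_abs h0
      have h2 : ((2 ^ (r - s) : ℕ) : ℤ) ≤ (2 ^ k : ℕ) := by exact_mod_cast hle
      nlinarith
    obtain ⟨c, hc⟩ := hodd i
    rw [ht0, sub_zero] at ht
    have ht' : 2 ^ (r - k) ∣ (2 * i + 1) * m := by exact_mod_cast ht
    rw [hN, hc] at ht'
    have := dvd_trans (Dvd.intro _ rfl) ht'
    omega
  · obtain ⟨Q', hQ'⟩ : ∃ Q', Q' = 2 ^ (r - s - k - 1) := ⟨_, rfl⟩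
    have hQ : 2 ^ (r - s - k) = 2 * Q' := by rw [hQ', ← pow_succ']; congr 1; omega
    have hB : 2 ^ (r - s) = 2 ^ k * (2 * Q') := by rw [← hQ, ← pow_add]; congr 1; omega
    have hQN : 2 * (2 * Q') ≤ 2 ^ (r - k) := by
      rw [← hQ, ← pow_succ']; exact Nat.pow_le_pow_right (by norm_num) (by omega)
    have hcard : 2 ^ (r - s)
        = (Finset.range (2 * Q') ×ˢ Finset.range (2 ^ k)).card := by
      rw [hB, Finset.card_product, Finset.card_range, Finset.card_range, mul_comm]
    -- A bad multiplier is recovered from its residue `t`, shifted by `Q = 2 * Q'` to be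
    -- nonnegative and halved (its parity is known), and the upper `k` bits of `a * m`.
    refine le_of_le_of_eq (Finset.card_le_card_of_injOn
      (fun i => (((2 * i + 1) * m + 2 * Q') % 2 ^ (r - k) / 2,
        (2 * i + 1) * m % 2 ^ r / 2 ^ (r - k))) ?_ ?_) hcard.symm
    · intro i hi
      have h := (Finset.mem_filter.1 (Finset.mem_coe.1 hi)).2
      rw [hr] at h
      obtain ⟨t, ht, htB⟩ := exists_residue (by positivity) h
      rw [hB] at htB
      have htQ : |t| < ((2 * Q' : ℕ) : ℤ) := by
        rw [Nat.cast_mul (2 ^ k)] at htB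
        exact lt_of_mul_lt_mul_left htB (by positivity)
      rw [abs_lt] at htQ
      have hmod : ((((2 * i + 1) * m + 2 * Q') % 2 ^ (r - k) : ℕ) : ℤ) = t + (2 * Q' : ℕ) := by
        rw [Int.natCast_mod, ← Int.emod_eq_of_lt (a := t + (2 * Q' : ℕ))
          (b := ((2 ^ (r - k) : ℕ) : ℤ)) (by omega) (by omega)]
        refine Int.emod_eq_emod_iff_emod_sub_eq_zero.2 (Int.emod_eq_zero_of_dvd ?_)
        convert ht using 1
        push_cast
        ring
      simp only [Finset.coe_product, Set.mem_prod, Finset.coe_range, Set.mem_Iio]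
      refine ⟨by omega, ?_⟩
      rw [Nat.div_lt_iff_lt_mul (by positivity), ← hr]
      exact Nat.mod_lt _ (by positivity)
    · intro i hi j hj hij
      have hi' := Finset.mem_range.1 (Finset.mem_filter.1 (Finset.mem_coe.1 hi)).1
      have hj' := Finset.mem_range.1 (Finset.mem_filter.1 (Finset.mem_coe.1 hj)).1
      simp only [Prod.mk.injEq] at hij
      obtain ⟨h1, h2⟩ := hij
      have hpar (i : ℕ) : ((2 * i + 1) * m + 2 * Q') % 2 ^ (r - k) % 2 = 1 := by
        rw [Nat.mod_mod_of_dvd _ (hN ▸ Dvd.intro _ rfl)]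
        have := Nat.odd_iff.1 (hodd i)
        omega
      have h3 : (2 * i + 1) * m + 2 * Q' ≡ (2 * j + 1) * m + 2 * Q' [MOD 2 ^ (r - k)] := by
        have := hpar i
        have := hpar j
        unfold Nat.ModEq
        omega
      have h4 : (2 * i + 1) * m % 2 ^ (r - k) = (2 * j + 1) * m % 2 ^ (r - k) :=
        Nat.ModEq.add_right_cancel' _ h3
      have h5 : (2 * i + 1) * m ≡ (2 * j + 1) * m [MOD 2 ^ r] := by
        have hdvd : 2 ^ (r - k) ∣ 2 ^ r := hr ▸ Dvd.intro_left _ rfl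
        unfold Nat.ModEq
        rw [← Nat.div_add_mod ((2 * i + 1) * m % 2 ^ r) (2 ^ (r - k)),
          ← Nat.div_add_mod ((2 * j + 1) * m % 2 ^ r) (2 ^ (r - k)), h2,
          Nat.mod_mod_of_dvd _ hdvd, Nat.mod_mod_of_dvd _ hdvd, h4]
      have h6 : 2 * i + 1 ≡ 2 * j + 1 [MOD 2 ^ r] :=
        Nat.ModEq.cancel_right_of_coprime
          ((Nat.coprime_two_left.2 hm).pow_left r) h5
      have h2r : 2 ^ r = 2 * 2 ^ (r - 1) := by rw [← pow_succ']; congr 1; omega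
      have := h6.eq_of_lt_of_lt (by omega) (by omega)
      omega

/-- A finite set of `n` naturals has at most `n (n - 1) / 2` pairs `x < y`. -/
lemma two_mul_card_lt_pairs (S : Finset ℕ) :
    2 * (S.offDiag.filter fun p => p.1 < p.2).card ≤ S.card * S.card - S.card := by
  rw [← Finset.offDiag_card, two_mul]
  conv_rhs => rw [← Finset.card_filter_add_card_filter_not (fun p : ℕ × ℕ => p.1 < p.2)]
  refine Nat.add_le_add_left (Finset.card_le_card_of_injOn Prod.swap ?_
    Prod.swap_injective.injOn) _
  rintro ⟨x, y⟩ h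
  simp only [Finset.coe_filter, Finset.mem_offDiag, Set.mem_ofPred_eq, Prod.swap] at h ⊢
  grind

/-- Lemma 4 of the paper: for `1 ≤ s ≤ r` and any set `S ⊆ [0, 2^r)` with
`|S|² ≤ 2^s`, there are multipliers `a, b ∈ [0, 2^r)` such that
`x ↦ ((a·x + b) mod 2^r) div 2^(r-s)` is injective on `S`. -/
theorem stmt_4 {r s : ℕ} (hs : 1 ≤ s) (hsr : s ≤ r) (S : Finset ℕ)
    (hS : ∀ x ∈ S, x < 2 ^ r) (hcard : S.card ^ 2 ≤ 2 ^ s) :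
    ∃ a b : ℕ, a < 2 ^ r ∧ b < 2 ^ r ∧
      Set.InjOn (fun x => ((a * x + b) % 2 ^ r) / 2 ^ (r - s)) (S : Set ℕ) := by
  have h2r : 2 ^ r = 2 * 2 ^ (r - 1) := by rw [← pow_succ']; congr 1; omega
  have hrs : 2 ^ r = 2 ^ s * 2 ^ (r - s) := by rw [← pow_add]; congr 1; omega
  let bad (p : ℕ × ℕ) : Finset ℕ := (Finset.range (2 ^ (r - 1))).filter fun i =>
      (2 * i + 1) * p.1 % 2 ^ r / 2 ^ (r - s) = (2 * i + 1) * p.2 % 2 ^ r / 2 ^ (r - s)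
  let T := S.offDiag.filter fun p => p.1 < p.2
  have hT : 2 * T.card < 2 ^ s := by
    have h := two_mul_card_lt_pairs S
    have : 0 < 2 ^ s := by positivity
    rw [sq] at hcard
    rcases Nat.eq_zero_or_pos S.card with h0 | h0
    · rw [h0] at h
      exact lt_of_le_of_lt h (by simp)
    · have := Nat.mul_pos h0 h0
      change 2 * (S.offDiag.filter fun p => p.1 < p.2).card < 2 ^ s
      omega
  have hbad : (T.biUnion bad).card < (Finset.range (2 ^ (r - 1))).card := by
    have h1 : (T.biUnion bad).card ≤ T.card * 2 ^ (r - s) := by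
      refine Finset.card_biUnion_le_card_mul _ _ _ fun p hp => ?_
      obtain ⟨hp1, hp2⟩ := Finset.mem_filter.1 hp
      exact card_bad hs hsr hp2 (hS _ (Finset.mem_offDiag.1 hp1).2.1)
    have h2 : 2 * T.card * 2 ^ (r - s) < 2 ^ s * 2 ^ (r - s) :=
      Nat.mul_lt_mul_of_pos_right hT (by positivity)
    rw [Finset.card_range]
    rw [mul_assoc] at h2
    omega
  obtain ⟨i, hi, hgood⟩ := Finset.exists_mem_notMem_of_card_lt_card hbad
  have hlt {x y : ℕ} (hx : x ∈ S) (hy : y ∈ S) (hxy : x < y) :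
      (2 * i + 1) * x % 2 ^ r / 2 ^ (r - s) ≠ (2 * i + 1) * y % 2 ^ r / 2 ^ (r - s) := fun h =>
    hgood <| Finset.mem_biUnion.2 ⟨(x, y),
      Finset.mem_filter.2 ⟨Finset.mem_offDiag.2 ⟨hx, hy, hxy.ne⟩, hxy⟩,
      Finset.mem_filter.2 ⟨hi, h⟩⟩
  have hi' := Finset.mem_range.1 hi
  refine ⟨2 * i + 1, 0, by omega, by positivity, fun x hx y hy h => ?_⟩
  simp only [add_zero] at h
  rcases lt_trichotomy x y with hxy | hxy | hxy
  · exact absurd h (hlt hx hy hxy)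
  · exact hxy
  · exact absurd h.symm (hlt hy hx hxy)
end

section
/- Let r ≥ 1 and let S be a set of natural numbers contained in [0, 2^r) with |S| = n ≥ 1. Then there exists a set A of bit positions, A ⊆ {0, 1, …, r−1} with |A| ≤ n − 1, such that for every pair of distinct elements x, y ∈ S, there exists a position p ∈ A with testBit(x, p) ≠ testBit(y, p). Consequently, the map sending x to the tuple of its bits at the positions in A is injective on S. -/
/-!
The positions are chosen greedily, by induction on `S`. Suppose `A` separates `S` and a new key `a`
is added. If `a` agrees on `A` with some `b ∈ S`, add one position `p` where `a` and `b` differ.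
Any other `y ∈ S` already differs from `b`, hence from `a`, at a position of `A`. So each key
after the first costs at most one position. The bound `x < 2 ^ r` forces `p < r`, since all
higher bits vanish.
-/

theorem exists_lt_testBit_ne {r x y : ℕ} (hx : x < 2 ^ r) (hy : y < 2 ^ r) (hxy : x ≠ y) :
    ∃ p, p < r ∧ Nat.testBit x p ≠ Nat.testBit y p := by
  obtain ⟨p, hp⟩ := Nat.exists_testBit_ne_of_ne hxy
  refine ⟨p, ?_, hp⟩
  by_contra! hrp
  have hpow : 2 ^ r ≤ 2 ^ p := Nat.pow_le_pow_right (by norm_num) hrp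
  exact hp (by rw [Nat.testBit_lt_two_pow (hx.trans_le hpow),
    Nat.testBit_lt_two_pow (hy.trans_le hpow)])

theorem stmt_5 {r n : ℕ} (hr : 1 ≤ r) (S : Finset ℕ) (hS : ∀ x ∈ S, x < 2 ^ r)
    (hn : S.card = n) (hn1 : 1 ≤ n) :
    ∃ A : Finset ℕ, A ⊆ Finset.range r ∧ A.card ≤ n - 1 ∧
      ∀ x ∈ S, ∀ y ∈ S, x ≠ y → ∃ p ∈ A, Nat.testBit x p ≠ Nat.testBit y p := by
  subst hn
  clear hn1
  induction S using Finset.induction_on with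
  | empty => exact ⟨∅, by simp⟩
  | insert a S ha ih =>
    obtain ⟨A, hAr, hAc, hA⟩ := ih fun x hx => hS x (Finset.mem_insert_of_mem hx)
    rw [Finset.card_insert_of_notMem ha]
    by_cases h : ∃ b ∈ S, ∀ p ∈ A, Nat.testBit a p = Nat.testBit b p
    · obtain ⟨b, hb, hab⟩ := h
      obtain ⟨p, hpr, hp⟩ := exists_lt_testBit_ne (hS a (Finset.mem_insert_self a S))
        (hS b (Finset.mem_insert_of_mem hb)) (fun e => ha (e ▸ hb))
      have hpos : 0 < S.card := Finset.card_pos.mpr ⟨b, hb⟩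
      have key : ∀ y ∈ S, ∃ q ∈ insert p A, Nat.testBit a q ≠ Nat.testBit y q := by
        intro y hy
        by_cases hyb : y = b
        · exact ⟨p, Finset.mem_insert_self p A, hyb ▸ hp⟩
        · obtain ⟨q, hq, hne⟩ := hA b hb y hy (Ne.symm hyb)
          exact ⟨q, Finset.mem_insert_of_mem hq, by rwa [hab q hq]⟩
      refine ⟨insert p A, ?_, ?_, ?_⟩
      · exact Finset.insert_subset (Finset.mem_range.mpr hpr) hAr
      · have := Finset.card_insert_le p A
        omega
      · intro x hx y hy hxy
        rcases Finset.mem_insert.mp hx with rfl | hxS <;> rcases Finset.mem_insert.mp hy with rfl | hyS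
        · exact absurd rfl hxy
        · exact key y hyS
        · obtain ⟨q, hq, hne⟩ := key x hxS
          exact ⟨q, hq, hne.symm⟩
        · obtain ⟨q, hq, hne⟩ := hA x hxS y hyS hxy
          exact ⟨q, Finset.mem_insert_of_mem hq, hne⟩
    · push Not at h
      refine ⟨A, hAr, by omega, ?_⟩
      intro x hx y hy hxy
      rcases Finset.mem_insert.mp hx with rfl | hxS <;> rcases Finset.mem_insert.mp hy with rfl | hyS
      · exact absurd rfl hxy
      · exact h y hyS
      · obtain ⟨q, hq, hne⟩ := h x hxS
        exact ⟨q, hq, hne.symm⟩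
      · exact hA x hxS y hyS hxy
end

section
/- Let x_1 < x_2 < ⋯ < x_n be natural numbers (n ≥ 2), and for each i with 1 ≤ i ≤ n−1 let p_i be the position of the most significant set bit of x_i XOR x_{i+1} (i.e., p_i = Nat.log2(x_i XOR x_{i+1})). Let A = {p_1, …, p_{n−1}}. Then for every pair of indices i < j, there exists a position p ∈ A such that testBit(x_i, p) ≠ testBit(x_j, p); that is, the projection onto the bit positions in A is injective on {x_1, …, x_n}. -/
/-!
For `a < b` let `p` be the highest position at which `a` and `b` differ; then `a` has bit `0` and
`b` has bit `1` there (`isTopDiff_log2`). If `a < b < c`, with highest differing positions `p` for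
`a, b` and `q` for `b, c`, then `p ≠ q`, because `b` has bit `1` at `p` and bit `0` at `q`; hence
the highest position at which `a` and `c` differ is `max p q` (`IsTopDiff.trans`). By induction
along the chain `x i < x (i + 1) < ⋯ < x j`, the highest position at which `x i` and `x j` differ is
the highest differing position of some consecutive pair, so it is one of the selected bits.
-/

/-- `p` is the highest position at which `a` and `b` differ, and `a` is the one with bit `0` there
(so that `a < b`). -/
def IsTopDiff (a b p : ℕ) : Prop :=
  a.testBit p = false ∧ b.testBit p = true ∧ ∀ k, p < k → a.testBit k = b.testBit k

theorem isTopDiff_log2 {a b : ℕ} (h : a < b) : IsTopDiff a b (Nat.log2 (a ^^^ b)) := by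
  have hne : a ^^^ b ≠ 0 := fun h0 => h.ne (Nat.xor_eq_zero_iff.mp h0)
  have htop := Nat.testBit_log2 hne
  have hhigh : ∀ k, Nat.log2 (a ^^^ b) < k → a.testBit k = b.testBit k := by
    intro k hk
    have hz := Nat.testBit_lt_two_pow ((Nat.log2_lt hne).mp hk)
    rw [Nat.testBit_xor] at hz
    simpa using hz
  generalize Nat.log2 (a ^^^ b) = p at htop hhigh ⊢
  rw [Nat.testBit_xor] at htop
  cases ha : a.testBit p <;> cases hb : b.testBit p <;> simp [ha, hb] at htop
  · exact ⟨ha, hb, hhigh⟩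
  · exact absurd (Nat.lt_of_testBit p hb ha fun k hk => (hhigh k hk).symm) h.asymm

theorem IsTopDiff.trans {a b c p q : ℕ} (h₁ : IsTopDiff a b p) (h₂ : IsTopDiff b c q) :
    IsTopDiff a c (max p q) := by
  obtain ⟨ha, hb, hab⟩ := h₁
  obtain ⟨hb', hc, hbc⟩ := h₂
  rcases lt_trichotomy p q with h | h | h
  · rw [max_eq_right h.le]
    exact ⟨(hab q h).trans hb', hc, fun k hk => (hab k (h.trans hk)).trans (hbc k hk)⟩
  · subst h
    simp [hb] at hb'
  · rw [max_eq_left h.le]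
    exact ⟨ha, (hbc p h).symm.trans hb, fun k hk => (hab k hk).trans (hbc k (h.trans hk))⟩

/-- Correctness of the bit-selection construction of Lemma 5: the most
significant bits of the XORs of consecutive elements in sorted order suffice
to distinguish all pairs of elements. -/
theorem stmt_6 {n : ℕ} (hn : 2 ≤ n) (x : ℕ → ℕ)
    (hmono : ∀ i, i + 1 < n → x i < x (i + 1)) :
    ∀ i j, i < j → j < n →
      ∃ p ∈ (Finset.range (n - 1)).image (fun i => Nat.log2 (x i ^^^ x (i + 1))),
        Nat.testBit (x i) p ≠ Nat.testBit (x j) p := by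
  intro i j hij hj
  have mem : ∀ k, k + 1 < n → Nat.log2 (x k ^^^ x (k + 1)) ∈
      (Finset.range (n - 1)).image (fun i => Nat.log2 (x i ^^^ x (i + 1))) := fun k hk =>
    Finset.mem_image_of_mem (fun i => Nat.log2 (x i ^^^ x (i + 1)))
      (Finset.mem_range.mpr (by omega))
  obtain ⟨p, hp, h0, h1, -⟩ : ∃ p ∈ (Finset.range (n - 1)).image
      (fun i => Nat.log2 (x i ^^^ x (i + 1))), IsTopDiff (x i) (x j) p := by
    induction j, hij using Nat.le_induction with
    | base => exact ⟨_, mem i hj, isTopDiff_log2 (hmono i hj)⟩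
    | succ j _ ih =>
      obtain ⟨p, hp, h⟩ := ih (by omega)
      refine ⟨_, ?_, h.trans (isTopDiff_log2 (hmono j hj))⟩
      rcases max_choice p (Nat.log2 (x j ^^^ x (j + 1))) with e | e <;> rw [e]
      · exact hp
      · exact mem j hj
  exact ⟨p, hp, by simp [h0, h1]⟩
end

section
/- Let u, N, σ be positive integers, let φ : Fin u → Fin N be an injective function, and let s, t : Fin u → Fin σ. Define β, β' : Fin N → Option (Fin u × Fin σ) by: β(y) = some (x, s(x)) if y = φ(x) for some x with s(x) ≠ 0, and β(y) = none otherwise; and β'(y) = some (x, t(x)) if y = φ(x) for some x with t(x) ≠ 0, and β'(y) = none otherwise. Then hammingDist(β, β') ≤ hammingDist(s, t). -/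
/-!
A cell `y` outside the range of `φ` is empty in both representations. For `y = φ x`, injectivity
means that the contents of `y` depend only on `s x` (resp. `t x`), so `s x = t x` forces equal
contents. Hence the differing cells lie in the image under `φ` of the differing positions.
-/

/-- Cell-representation claim: storing the position–value pairs of the non-zero
entries of a string in cells determined by an injective placement map `φ`
does not increase the Hamming distance. -/
theorem stmt_8 {u N σ : ℕ} (hu : 0 < u) (hN : 0 < N) [NeZero σ]
    (φ : Fin u → Fin N) (hφ : Function.Injective φ)
    (s t : Fin u → Fin σ)
    (β β' : Fin N → Option (Fin u × Fin σ))
    (hβ1 : ∀ x : Fin u, s x ≠ 0 → β (φ x) = some (x, s x))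
    (hβ2 : ∀ y : Fin N, (¬ ∃ x : Fin u, φ x = y ∧ s x ≠ 0) → β y = none)
    (hβ'1 : ∀ x : Fin u, t x ≠ 0 → β' (φ x) = some (x, t x))
    (hβ'2 : ∀ y : Fin N, (¬ ∃ x : Fin u, φ x = y ∧ t x ≠ 0) → β' y = none) :
    hammingDist β β' ≤ hammingDist s t := by
  classical
  -- A cell whose contents differ is the cell `φ x` of some position `x` with `s x ≠ t x`.
  have hsub : Finset.univ.filter (fun y => β y ≠ β' y) ⊆
      (Finset.univ.filter (fun x => s x ≠ t x)).image φ := by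
    intro y hy
    have hne : β y ≠ β' y := (Finset.mem_filter.mp hy).2
    by_cases hr : ∃ x, φ x = y
    · obtain ⟨x, rfl⟩ := hr
      refine Finset.mem_image_of_mem φ (Finset.mem_filter.mpr ⟨Finset.mem_univ x, ?_⟩)
      intro hst
      apply hne
      by_cases h0 : s x = 0
      · -- Injectivity: no other position can write to the cell `φ x`, so it is empty in both.
        rw [hβ2 (φ x), hβ'2 (φ x)]
        · rintro ⟨z, hz, hz0⟩
          exact hz0 (by rw [hφ hz, ← hst, h0])
        · rintro ⟨z, hz, hz0⟩
          exact hz0 (by rw [hφ hz, h0])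
      · rw [hβ1 x h0, hβ'1 x (hst ▸ h0), hst]
    · refine absurd ?_ hne
      rw [hβ2 y fun ⟨x, hx, _⟩ => hr ⟨x, hx⟩, hβ'2 y fun ⟨x, hx, _⟩ => hr ⟨x, hx⟩]
  have h := (Finset.card_le_card hsub).trans Finset.card_image_le
  unfold hammingDist
  convert h
end

section
/- Let u ≥ 1, σ ≥ 2, 0 ≤ k ≤ u, and M ≥ 1. Suppose enc : (Fin u → Fin σ) → Fin M and dec : Fin M → (Fin u → Fin σ) → (Fin u → Fin σ) satisfy dec(enc(s))(t) = s for all strings s, t : Fin u → Fin σ with hammingDist(s, t) ≤ k. Then M ≥ ∑_{i=0}^{k} C(u, i) · (σ − 1)^i, where C(u, i) is the binomial coefficient. In particular, M ≥ C(u, k) · (σ − 1)^k, so the message length log₂ M is at least k·log₂(u/k) + k·log₂(σ − 1) up to additive lower-order terms. -/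
/-!
For a fixed `t`, the decoder `dec · t` is a left inverse of `enc` on the Hamming ball of radius `k`
around `t`, so `enc` is injective on that ball and `M` is at least its size. The ball is the
disjoint union of the spheres of radius `i ≤ k`. The sphere of radius `i` is counted by the set `S`
of positions where `s` differs from `t`: there are `u.choose i` such sets, and each is realised by
`(σ - 1) ^ i` strings, since every position in `S` can take any letter other than that of `t`.
-/

/-- The strings that differ from `t` exactly on `S` form a product of finite sets: `σ - 1` letters at
each position of `S`, one letter elsewhere. -/
theorem card_filter_diffSet_eq {u σ : ℕ} (t : Fin u → Fin σ) (S : Finset (Fin u)) :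
    (Finset.univ.filter fun s : Fin u → Fin σ =>
      (Finset.univ.filter fun x => s x ≠ t x) = S).card = (σ - 1) ^ S.card := by
  have h : (Finset.univ.filter fun s : Fin u → Fin σ =>
      (Finset.univ.filter fun x => s x ≠ t x) = S) =
      Fintype.piFinset fun x => if x ∈ S then Finset.univ.erase (t x) else {t x} := by
    ext s
    simp only [Finset.mem_filter, Finset.mem_univ, true_and, Fintype.mem_piFinset, Finset.ext_iff]
    refine forall_congr' fun x => ?_
    by_cases hx : x ∈ S <;> simp [hx]
  rw [h, Fintype.card_piFinset]
  simp [apply_ite Finset.card]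

theorem card_hammingSphere {u σ : ℕ} (t : Fin u → Fin σ) (i : ℕ) :
    (Finset.univ.filter fun s : Fin u → Fin σ => hammingDist s t = i).card =
      u.choose i * (σ - 1) ^ i := by
  rw [Finset.card_eq_sum_card_fiberwise (f := fun s => Finset.univ.filter fun x => s x ≠ t x)
    (t := Finset.powersetCard i Finset.univ)]
  · rw [Finset.sum_congr rfl (g := fun _ => (σ - 1) ^ i)]
    · simp
    · intro S hS
      have hcard := (Finset.mem_powersetCard.1 hS).2
      rw [← hcard, ← card_filter_diffSet_eq t S, Finset.filter_filter]
      congr 1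
      ext s
      simp only [Finset.mem_filter, Finset.mem_univ, true_and, and_iff_right_iff_imp]
      rintro rfl
      rfl
  · intro s hs
    simpa [Finset.mem_powersetCard, hammingDist] using hs

theorem card_hammingBall {u σ : ℕ} (t : Fin u → Fin σ) (k : ℕ) :
    (Finset.univ.filter fun s : Fin u → Fin σ => hammingDist s t ≤ k).card =
      ∑ i ∈ Finset.range (k + 1), u.choose i * (σ - 1) ^ i := by
  rw [Finset.card_eq_sum_card_fiberwise (f := fun s => hammingDist s t)
    (t := Finset.range (k + 1))]
  · refine Finset.sum_congr rfl fun i hi => ?_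
    rw [← card_hammingSphere t i, Finset.filter_filter]
    congr 1
    ext s
    simp only [Finset.mem_filter, Finset.mem_univ, true_and, and_iff_right_iff_imp]
    rintro rfl
    exact Nat.lt_succ_iff.1 (Finset.mem_range.1 hi)
  · intro s hs
    simpa [Nat.lt_succ_iff] using hs


/-- Message-size lower bound for one-way correction of `k` mismatches: a correct
encoding/decoding scheme needs at least as many messages as the size of a
Hamming ball of radius `k`, namely `∑_{i=0}^{k} C(u,i)·(σ-1)^i`; in particular
at least `C(u,k)·(σ-1)^k` messages. -/
theorem stmt_11 {u σ k M : ℕ} (hu : 1 ≤ u) (hσ : 2 ≤ σ) (hk : k ≤ u) (hM : 1 ≤ M)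
    (enc : (Fin u → Fin σ) → Fin M)
    (dec : Fin M → (Fin u → Fin σ) → (Fin u → Fin σ))
    (hcorrect : ∀ s t : Fin u → Fin σ, hammingDist s t ≤ k → dec (enc s) t = s) :
    (∑ i ∈ Finset.range (k + 1), u.choose i * (σ - 1) ^ i) ≤ M ∧
      u.choose k * (σ - 1) ^ k ≤ M := by
  have hball : (∑ i ∈ Finset.range (k + 1), u.choose i * (σ - 1) ^ i) ≤ M := by
    let t : Fin u → Fin σ := fun _ => ⟨0, by omega⟩
    rw [← card_hammingBall t k]
    have hinj : Set.InjOn enc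
        (Finset.univ.filter fun s : Fin u → Fin σ => hammingDist s t ≤ k) := by
      intro s hs s' hs' h
      rw [← hcorrect s t (by simpa using hs), h, hcorrect s' t (by simpa using hs')]
    simpa using Finset.card_le_card_of_injOn enc (t := Finset.univ) (by simp) hinj
  refine ⟨hball, le_trans ?_ hball⟩
  exact Finset.single_le_sum (f := fun i => u.choose i * (σ - 1) ^ i)
    (fun _ _ => Nat.zero_le _) (Finset.self_mem_range_succ k)
end
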